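/- Let A be a subalgebra of n×n complex matrices in which every element has at least one multiple eigenvalue, and let M ∈ A have the maximal number of distinct eigenvalues. Let λ be a multiple eigenvalue of M with generalized eigenspace E, and let P ∈ A be the projection onto E along the sum of the other generalized eigenspaces. Then for every N ∈ A, the endomorphism φ_N of E defined by φ_N(v) = PNv has a single eigenvalue. -/

import Mathlib

/-- Generalized eigenspace of an n×n matrix for an eigenvalue λ. -/
noncomputable def genE (n : ℕ) (M : Matrix (Fin n) (Fin n) ℂ) (lam : ℂ) :
    Submodule ℂ (Fin n → ℂ) :=
  LinearMap.ker (Matrix.mulVecLin ((M - lam • (1 : Matrix (Fin n) (Fin n) ℂ)) ^ n))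

/-- Sum of the generalized eigenspaces of M for values other than λ. -/
noncomputable def genF (n : ℕ) (M : Matrix (Fin n) (Fin n) ℂ) (lam : ℂ) :
    Submodule ℂ (Fin n → ℂ) :=
  ⨆ μ ≠ lam, genE n M μ


lemma genE_eq (n : ℕ) (M : Matrix (Fin n) (Fin n) ℂ) (μ : ℂ) :
    genE n M μ = Module.End.maxGenEigenspace (Matrix.toLin' M) μ := by
  rw [Module.End.maxGenEigenspace_eq_genEigenspace_finrank, Module.End.genEigenspace_nat]
  simp only [Module.finrank_fin_fun]
  unfold genE
  rw [← Matrix.toLin'_apply', Matrix.toLin'_pow, map_sub, map_smul, Matrix.toLin'_one]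
  rfl

lemma mem_roots_iff (n : ℕ) (M : Matrix (Fin n) (Fin n) ℂ) (μ : ℂ) :
    μ ∈ M.charpoly.roots.toFinset ↔ ∃ v, v ≠ 0 ∧ M.mulVec v = μ • v := by
  rw [Multiset.mem_toFinset, Polynomial.mem_roots M.charpoly_monic.ne_zero,
    ← Matrix.charpoly_toLin', ← Module.End.hasEigenvalue_iff_isRoot_charpoly]
  constructor
  · intro h
    obtain ⟨v, hv⟩ := h.exists_hasEigenvector
    exact ⟨v, hv.2, by simpa using hv.apply_eq_smul⟩
  · rintro ⟨v, hv, h⟩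
    exact Module.End.hasEigenvalue_of_hasEigenvector
      (x := v) ⟨Module.End.mem_eigenspace_iff.2 (by simpa using h), hv⟩

lemma eigvec_mem_genE (n : ℕ) (M : Matrix (Fin n) (Fin n) ℂ) (μ : ℂ) (v : Fin n → ℂ)
    (h : M.mulVec v = μ • v) : v ∈ genE n M μ := by
  rw [genE_eq]
  have : v ∈ Module.End.eigenspace (Matrix.toLin' M) μ :=
    Module.End.mem_eigenspace_iff.2 (by simpa using h)
  exact (Module.End.genEigenspace (Matrix.toLin' M) μ).monotone le_top this

lemma range_mem (n : ℕ) (M P : Matrix (Fin n) (Fin n) ℂ) (lam : ℂ)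
    (hP1 : ∀ x ∈ genE n M lam, P.mulVec x = x)
    (hP2 : ∀ x ∈ genF n M lam, P.mulVec x = 0) (y : Fin n → ℂ) :
    P.mulVec y ∈ genE n M lam := by
  have htop : (⊤ : Submodule ℂ (Fin n → ℂ)) ≤ genE n M lam ⊔ genF n M lam := by
    rw [← Module.End.iSup_maxGenEigenspace_eq_top (Matrix.toLin' M)]
    refine iSup_le fun μ => ?_
    rw [← genE_eq]
    by_cases h : μ = lam
    · rw [h]; exact le_sup_left
    · exact le_sup_of_le_right (le_iSup₂_of_le (f := fun μ (_ : μ ≠ lam) => genE n M μ) μ h le_rfl)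
  obtain ⟨a, ha, b, hb, rfl⟩ := Submodule.mem_sup.1 (htop (Submodule.mem_top (x := y)))
  rw [Matrix.mulVec_add, hP1 a ha, hP2 b hb, add_zero]
  exact ha

/-- If every element of A has a multiple eigenvalue, M ∈ A has a maximal
number of distinct eigenvalues, λ is a multiple eigenvalue of M with
generalized eigenspace E and P ∈ A the projection onto E along the rest,
then for every N ∈ A the endomorphism φ_N : v ↦ PNv of E has a single
eigenvalue. -/
theorem stmt8 (n : ℕ) (A : Subalgebra ℂ (Matrix (Fin n) (Fin n) ℂ))
    (hmult : ∀ N ∈ A, ∃ μ : ℂ, 2 ≤ (Matrix.charpoly N).rootMultiplicity μ)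
    (M : Matrix (Fin n) (Fin n) ℂ) (hM : M ∈ A)
    (hmax : ∀ N ∈ A, (Matrix.charpoly N).roots.toFinset.card ≤
        (Matrix.charpoly M).roots.toFinset.card)
    (lam : ℂ) (hlam : 2 ≤ (Matrix.charpoly M).rootMultiplicity lam)
    (P : Matrix (Fin n) (Fin n) ℂ) (hPA : P ∈ A)
    (hP1 : ∀ x ∈ genE n M lam, P.mulVec x = x)
    (hP2 : ∀ x ∈ genF n M lam, P.mulVec x = 0) :
    ∀ N ∈ A, ∃! μ : ℂ, ∃ x ∈ genE n M lam, x ≠ 0 ∧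
      P.mulVec (N.mulVec x) = μ • x := by
  intro N hN
  have hlr : lam ∈ M.charpoly.roots.toFinset := by
    rw [Multiset.mem_toFinset, ← Multiset.count_pos, Polynomial.count_roots]
    omega
  have hR := range_mem n M P lam hP1 hP2
  apply existsUnique_of_exists_of_unique
  · obtain ⟨v, hv0, hv⟩ := (mem_roots_iff n M lam).1 hlr
    have hvE := eigvec_mem_genE n M lam v hv
    haveI : Nontrivial (genE n M lam) :=
      ⟨⟨⟨v, hvE⟩, 0, fun h => hv0 (congrArg Subtype.val h)⟩⟩
    let f : Module.End ℂ (genE n M lam) :=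
      (Matrix.toLin' (P * N)).restrict (p := genE n M lam) (q := genE n M lam) (fun x _ => by
        rw [Matrix.toLin'_apply, ← Matrix.mulVec_mulVec]; exact hR _)
    obtain ⟨μ, hμ⟩ := Module.End.exists_eigenvalue f
    obtain ⟨x, hx⟩ := hμ.exists_hasEigenvector
    refine ⟨μ, x, x.2, fun h => hx.2 (Subtype.ext h), ?_⟩
    have := congrArg Subtype.val hx.apply_eq_smul
    rw [Matrix.mulVec_mulVec]
    simpa [f] using this
  · rintro a b ⟨x, hxE, hx0, hx⟩ ⟨y, hyE, hy0, hy⟩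
    by_contra hab
    set S := M.charpoly.roots.toFinset with hS
    obtain ⟨c, hc⟩ := Infinite.exists_notMem_finset
      (S.image (fun s => s - a) ∪ S.image (fun s => s - b))
    have hca : a + c ∉ S := fun h => hc (Finset.mem_union_left _
      (Finset.mem_image.2 ⟨_, h, by ring⟩))
    have hcb : b + c ∉ S := fun h => hc (Finset.mem_union_right _
      (Finset.mem_image.2 ⟨_, h, by ring⟩))
    set K := M * (1 - P) + c • P + P * N * P with hK
    have hKA : K ∈ A :=
      A.add_mem (A.add_mem (A.mul_mem hM (A.sub_mem A.one_mem hPA)) (A.smul_mem hPA c))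
        (A.mul_mem (A.mul_mem hPA hN) hPA)
    have hKv : ∀ v, K.mulVec v =
        M.mulVec (v - P.mulVec v) + c • P.mulVec v + P.mulVec (N.mulVec (P.mulVec v)) := by
      intro v
      simp only [hK, Matrix.add_mulVec, ← Matrix.mulVec_mulVec, Matrix.sub_mulVec,
        Matrix.one_mulVec, Matrix.smul_mulVec]
    have hE : ∀ d v, v ∈ genE n M lam → v ≠ 0 → P.mulVec (N.mulVec v) = d • v →
        d + c ∈ K.charpoly.roots.toFinset := by
      intro d v hv hv0 h
      refine (mem_roots_iff n K _).2 ⟨v, hv0, ?_⟩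
      rw [hKv, hP1 v hv, h, sub_self, Matrix.mulVec_zero, zero_add, add_smul, add_comm]
    have hsub : insert (a + c) (insert (b + c) (S.erase lam)) ⊆ K.charpoly.roots.toFinset := by
      intro μ hμ
      rw [Finset.mem_insert, Finset.mem_insert, Finset.mem_erase] at hμ
      rcases hμ with rfl | rfl | ⟨hne, hμ⟩
      · exact hE a x hxE hx0 hx
      · exact hE b y hyE hy0 hy
      · obtain ⟨v, hv0, hv⟩ := (mem_roots_iff n M μ).1 hμ
        refine (mem_roots_iff n K _).2 ⟨v, hv0, ?_⟩
        have hvF : v ∈ genF n M lam :=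
          (le_iSup₂_of_le (f := fun μ (_ : μ ≠ lam) => genE n M μ) μ hne le_rfl)
            (eigvec_mem_genE n M μ v hv)
        rw [hKv, hP2 v hvF]
        simp [hv]
    have h1 := Finset.card_le_card hsub
    have h2 := hmax K hKA
    have hb' : b + c ∉ S.erase lam := fun h => hcb (Finset.mem_of_mem_erase h)
    have ha' : a + c ∉ insert (b + c) (S.erase lam) := by
      rw [Finset.mem_insert]
      rintro (h | h)
      · exact hab (add_right_cancel h)
      · exact hca (Finset.mem_of_mem_erase h)
    rw [Finset.card_insert_of_notMem ha', Finset.card_insert_of_notMem hb'] at h1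
    have h3 := Finset.card_erase_add_one hlr
    omega
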